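/- There exists a (possibly infinite) deterministic matrix M = ⟨V, ⊞_M, D⟩, where V is a set, ⊞_M : V × V → V is a function, and D ⊆ V, such that for all sets of formulas Γ, Δ: Γ ⊩_M Δ if and only if Γ ⊩_⊞ Δ. -/

import Mathlib

/-- Formulas built from countably many propositional variables with a single
binary connective `⊞` (platypus). -/
inductive Fm : Type where
  | var : ℕ → Fm
  | pl : Fm → Fm → Fm
deriving DecidableEq

namespace Fm

/-- The set of propositional variables occurring in a formula. -/
def vars : Fm → Set ℕ
  | var n => {n}
  | pl a b => vars a ∪ vars b

/-- A `𝔅_⊞`-valuation: a two-valued function such that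
`v (φ ⊞ ψ) ∈ {min (v φ) (v ψ), max (v φ) (v ψ)}`. -/
def IsVal (v : Fm → Bool) : Prop :=
  ∀ a b : Fm, v (a.pl b) = (v a && v b) ∨ v (a.pl b) = (v a || v b)

/-- The multiple-conclusion consequence `Γ ⊩_⊞ Δ`. -/
def Mc (Γ Δ : Set Fm) : Prop :=
  ∀ v : Fm → Bool, IsVal v → (∀ φ ∈ Γ, v φ = true) → ∃ ψ ∈ Δ, v ψ = true

/-- The single-conclusion consequence `Γ ⊢_⊞ φ`. -/
def Sc (Γ : Set Fm) (φ : Fm) : Prop := Mc Γ {φ}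

end Fm

namespace Fm

/-- An `M`-valuation for a deterministic matrix `⟨V, op, D⟩`. -/
def IsMatVal {V : Type} (op : V → V → V) (v : Fm → V) : Prop :=
  ∀ a b : Fm, v (a.pl b) = op (v a) (v b)

/-- The multiple-conclusion consequence `Γ ⊩_M Δ` of a deterministic matrix. -/
def MatMc {V : Type} (op : V → V → V) (D : Set V) (Γ Δ : Set Fm) : Prop :=
  ∀ v : Fm → V, IsMatVal op v → (∀ φ ∈ Γ, v φ ∈ D) → ∃ ψ ∈ Δ, v ψ ∈ D

end Fm

/-!
Take as truth values the pairs `(φ, v)` of a formula and a `𝔅_⊞`-valuation, designated when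
`v φ = 1`. Within the copy of the formulas indexed by a fixed `v`, the operation is syntactic, so
`φ ↦ (φ, v)` is a matrix valuation inducing `v`. Across different copies the operation returns its
left argument, which is harmless because a truth value always equals its minimum or its maximum
with any other.
-/

namespace Fm

section Designation

variable {V : Type} {op : V → V → V} {t : V → Bool} {Γ Δ : Set Fm}

/-- `t` is a homomorphism from the algebra `⟨V, op⟩` to the nondeterministic two-valued algebra
`𝔅_⊞`. `IsVal` is the case of the formula algebra; for a matrix, `t` is the characteristic function
of the designated set. -/
def IsMinMaxHom (op : V → V → V) (t : V → Bool) : Prop :=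
  ∀ x y : V, t (op x y) = (t x && t y) ∨ t (op x y) = (t x || t y)

theorem IsMinMaxHom.isVal_comp (ht : IsMinMaxHom op t) {w : Fm → V} (hw : IsMatVal op w) :
    IsVal (t ∘ w) := fun a b => by
  simpa only [Function.comp_apply, hw a b] using ht (w a) (w b)

theorem Mc.matMc (h : Mc Γ Δ) (ht : IsMinMaxHom op t) : MatMc op {x | t x = true} Γ Δ :=
  fun w hw hΓ => h (t ∘ w) (ht.isVal_comp hw) hΓ

theorem MatMc.mc (h : MatMc op {x | t x = true} Γ Δ)
    (hlift : ∀ v, IsVal v → ∃ w, IsMatVal op w ∧ t ∘ w = v) : Mc Γ Δ := by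
  intro v hv hΓ
  obtain ⟨w, hw, rfl⟩ := hlift v hv
  exact h w hw hΓ

end Designation

/-- The values of the characterizing matrix: a formula tagged with a `𝔅_⊞`-valuation, the tag
saying to which copy of the formula algebra it belongs. -/
abbrev TaggedFm : Type := Fm × {v : Fm → Bool // IsVal v}

namespace TaggedFm

/-- The truth value of a tagged formula under its own tag. The designated values of the
characterizing matrix are those with truth value `true`. -/
def truth (x : TaggedFm) : Bool := x.2.1 x.1

open Classical in
/-- The operation of the characterizing matrix: `⊞` on formulas with equal tags, and the left
projection otherwise. -/
noncomputable def pl (x y : TaggedFm) : TaggedFm :=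
  if x.2 = y.2 then (x.1.pl y.1, x.2) else x

theorem pl_same_tag (φ ψ : Fm) (v : {v : Fm → Bool // IsVal v}) :
    pl (φ, v) (ψ, v) = (φ.pl ψ, v) := if_pos rfl

theorem pl_of_tag_ne {x y : TaggedFm} (h : x.2 ≠ y.2) : pl x y = x := if_neg h

theorem isMinMaxHom_truth : IsMinMaxHom pl truth := by
  intro x y
  by_cases htag : x.2 = y.2
  · obtain ⟨φ, v⟩ := x
    obtain ⟨ψ, _⟩ := y
    obtain rfl : v = _ := htag
    rw [pl_same_tag]
    exact v.2 φ ψ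
  · rw [pl_of_tag_ne htag]
    cases truth x
    · exact .inl (Bool.false_and _).symm
    · exact .inr (Bool.true_or _).symm

theorem exists_isMatVal_truth_comp_eq {v : Fm → Bool} (hv : IsVal v) :
    ∃ w, IsMatVal pl w ∧ truth ∘ w = v :=
  ⟨fun φ => (φ, ⟨v, hv⟩), fun φ ψ => (pl_same_tag φ ψ _).symm, rfl⟩

end TaggedFm

end Fm

open Fm in
/-- there is a (possibly infinite) deterministic matrix
`M = ⟨V, ⊞_M, D⟩` characterizing `⊩_⊞`. -/
theorem platypus_single_matrix :
    ∃ (V : Type) (op : V → V → V) (D : Set V),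
      ∀ Γ Δ : Set Fm, MatMc op D Γ Δ ↔ Mc Γ Δ := by
  refine ⟨TaggedFm, TaggedFm.pl, {x | x.truth = true}, fun Γ Δ => ⟨fun h => ?_, fun h => ?_⟩⟩
  · exact h.mc fun _ => TaggedFm.exists_isMatVal_truth_comp_eq
  · exact h.matMc TaggedFm.isMinMaxHom_truth
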